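/- Let q be a permutation of length k with permutation matrix M_q, and suppose d is a constant such that for every positive integer n, every n×n 0-1 matrix avoiding M_q has at most d·n entries equal to 1. Then for all positive integers n and m, the number G_{n,m}(q) of simple bipartite graphs on ([n·m],[n]) avoiding the bipartite graph G_q as an ordered subgraph satisfies G_{n,m}(q) ≤ ((2^m − 1) · 15^2)^(d·n). -/

import Mathlib

/-- A permutation `p` of length `n` contains the permutation `q` of length `k` as a pattern. -/
def PermContains {n k : ℕ} (p : Equiv.Perm (Fin n)) (q : Equiv.Perm (Fin k)) : Prop :=
  ∃ f : Fin k → Fin n, StrictMono f ∧ ∀ a b : Fin k, p (f a) < p (f b) ↔ q a < q b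

/-- A word `w` over `{1,…,n}` contains the permutation pattern `q` of length `k`. -/
def WordContains {l n k : ℕ} (w : Fin l → Fin n) (q : Equiv.Perm (Fin k)) : Prop :=
  ∃ f : Fin k → Fin l, StrictMono f ∧ ∀ a b : Fin k, w (f a) < w (f b) ↔ q a < q b

/-- `w` is a permutation of the regular multiset `[n]_m`: each letter occurs exactly `m` times. -/
def IsRegularWord {l n : ℕ} (m : ℕ) (w : Fin l → Fin n) : Prop :=
  ∀ j : Fin n, (Finset.univ.filter fun i => w i = j).card = m

/-- Ordered-subgraph containment for simple bipartite graphs given by their edge sets. -/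
def GraphContains {n n' k k' : ℕ} (P : Finset (Fin n × Fin n')) (Q : Finset (Fin k × Fin k')) :
    Prop :=
  ∃ (f : Fin k → Fin n) (f' : Fin k' → Fin n'),
    StrictMono f ∧ StrictMono f' ∧ ∀ v v', (v, v') ∈ Q → (f v, f' v') ∈ P

/-- The bipartite graph associated to a permutation `q`: edges `(i, q i)`. -/
def permGraph {k : ℕ} (q : Equiv.Perm (Fin k)) : Finset (Fin k × Fin k) :=
  Finset.univ.image fun i => (i, q i)

/-- The bipartite graph associated to a word `w`: edges `(i, w i)`. -/
def wordGraph {l n : ℕ} (w : Fin l → Fin n) : Finset (Fin l × Fin n) :=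
  Finset.univ.image fun i => (i, w i)

/-- Pattern containment for 0-1 matrices. -/
def MatContains {n n' k k' : ℕ} (P : Fin n → Fin n' → Bool) (Q : Fin k → Fin k' → Bool) : Prop :=
  ∃ (r : Fin k → Fin n) (c : Fin k' → Fin n'),
    StrictMono r ∧ StrictMono c ∧ ∀ i j, Q i j = true → P (r i) (c j) = true

/-- The permutation matrix of a permutation `q`: 1-entry at `(i, q i)`. -/
def permMatrix {k : ℕ} (q : Equiv.Perm (Fin k)) : Fin k → Fin k → Bool :=
  fun i j => decide (q i = j)

/-- The number of 1-entries of a 0-1 matrix. -/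
def oneEntries {n n' : ℕ} (P : Fin n → Fin n' → Bool) : ℕ :=
  (Finset.univ.filter fun ij : Fin n × Fin n' => P ij.1 ij.2 = true).card

/-- The contraction of a bipartite graph on `([n·m],[n])` to one on `([n],[n])`:
`(i,j)` is an edge iff some vertex `t` in the `i`-th block of `m` consecutive vertices
is joined to `j`. -/
def contraction {n m : ℕ} (G : Finset (Fin (n * m) × Fin n)) : Finset (Fin n × Fin n) :=
  Finset.univ.filter fun ij : Fin n × Fin n =>
    ∃ t : Fin (n * m), (t, ij.2) ∈ G ∧ m * (ij.1 : ℕ) ≤ (t : ℕ) ∧ (t : ℕ) < m * ((ij.1 : ℕ) + 1)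

/-- The 0-1 adjacency matrix of a bipartite graph. -/
def adjMatrix {n n' : ℕ} (G : Finset (Fin n × Fin n')) : Fin n → Fin n' → Bool :=
  fun i j => decide ((i, j) ∈ G)

/-- A word contains the multiset pattern `212`. -/
def Contains212 {l n : ℕ} (w : Fin l → Fin n) : Prop :=
  ∃ i₁ i₂ i₃ : Fin l, i₁ < i₂ ∧ i₂ < i₃ ∧ w i₁ = w i₃ ∧ w i₂ < w i₁

/-!
Collapsing consecutive vertices of an ordered bipartite graph into blocks never creates a new copy
of a permutation graph: the edges of such a copy have pairwise distinct endpoints on both sides, so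
lifting each edge separately to the original graph keeps their relative order. A contracted graph
with at most `D` edges has at most `(2 ^ (r * s) - 1) ^ D` preimages under contraction of `r × s`
blocks, one nonempty subset of a block for each edge. By the hypothesis on 0-1 matrices, one can
take `D = d * n` for graphs on `([n], [n])`. Contracting `2 × 2` blocks halves `n`, rounding up, and
costs a factor `15 ^ (d * ⌈n / 2⌉)`; repeating this yields at most `15 ^ (2 * d * n)` avoiding
graphs on `([n], [n])`. Contracting `m × 1` blocks reduces `([n * m], [n])` to this case.
-/

section ImageFibers

open Finset

theorem card_filter_image_eq_le {α β : Type*} [Fintype α] [DecidableEq β] {F : α → β} {s : ℕ}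
    (hF : ∀ b, #{x | F x = b} ≤ s) (H : Finset β) :
    #{G : Finset α | G.image F = H} ≤ (2 ^ s - 1) ^ #H := by
  classical
  let nonemptyParts (b : β) : Finset (Finset α) := ({x | F x = b} : Finset α).powerset.erase ∅
  have card_parts (b : β) : #(nonemptyParts b) ≤ 2 ^ s - 1 := by
    rw [card_erase_of_mem (empty_mem_powerset _), card_powerset]
    exact Nat.sub_le_sub_right (Nat.pow_le_pow_right two_pos (hF b)) 1
  calc #{G : Finset α | G.image F = H}
      ≤ #(H.pi nonemptyParts) := by
        refine card_le_card_of_injOn (fun G b _ => {x ∈ G | F x = b}) ?_ ?_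
        · intro G hG
          obtain rfl : G.image F = H := by simpa using hG
          refine mem_coe.2 (mem_pi.2 fun b hb => mem_erase.2 ⟨?_, ?_⟩)
          · obtain ⟨x, hx, hxb⟩ := mem_image.1 hb
            exact ne_empty_of_mem (mem_filter.2 ⟨hx, hxb⟩)
          · exact mem_powerset.2 (filter_subset_filter _ (subset_univ _))
        · intro G hG G' hG' hparts
          have biUnion_parts {K : Finset α} (hK : K ∈ ({K | K.image F = H} : Finset (Finset α))) :
              (H.biUnion fun b => {x ∈ K | F x = b}) = K :=
            biUnion_filter_eq_of_maps_to fun x hx =>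
              (mem_filter.1 hK).2 ▸ mem_image_of_mem F hx
          rw [← biUnion_parts hG, ← biUnion_parts hG']
          exact biUnion_congr rfl fun b hb => congrFun (congrFun hparts b) hb
    _ = ∏ b ∈ H, #(nonemptyParts b) := card_pi _ _
    _ ≤ (2 ^ s - 1) ^ #H := prod_le_pow_card _ _ _ fun b _ => card_parts b

theorem card_le_pow_mul_card_of_image_mem {α β : Type*} [Fintype α] [DecidableEq β]
    {F : α → β} {s D : ℕ} (hs : 0 < s) (hF : ∀ b, #{x | F x = b} ≤ s)
    {A : Finset (Finset α)} {B : Finset (Finset β)} (hAB : ∀ G ∈ A, G.image F ∈ B)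
    (hB : ∀ H ∈ B, #H ≤ D) : #A ≤ (2 ^ s - 1) ^ D * #B := by
  classical
  have base_pos : 0 < 2 ^ s - 1 := Nat.sub_pos_of_lt (Nat.one_lt_two_pow hs.ne')
  refine card_le_mul_card_image_of_maps_to hAB _ fun H hH => ?_
  calc #{G ∈ A | G.image F = H}
      ≤ #{G : Finset α | G.image F = H} := card_le_card (filter_subset_filter _ (subset_univ A))
    _ ≤ (2 ^ s - 1) ^ #H := card_filter_image_eq_le hF H
    _ ≤ (2 ^ s - 1) ^ D := Nat.pow_le_pow_right base_pos (hB H hH)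

theorem card_le_two_pow_of_subsingleton {α : Type*} [Subsingleton α] {D : ℕ} {A : Finset (Finset α)}
    (hA : ∀ G ∈ A, #G ≤ D) : #A ≤ 2 ^ D := by
  have := Fintype.ofFinite α
  rcases Nat.eq_zero_or_pos D with rfl | hD
  · have : A ⊆ {∅} := fun G hG => mem_singleton.2 (card_eq_zero.1 (Nat.le_zero.1 (hA G hG)))
    simpa using card_le_card this
  · calc #A ≤ Fintype.card (Finset α) := card_le_univ A
      _ = 2 ^ Fintype.card α := Fintype.card_finset
      _ ≤ 2 ^ D :=
        Nat.pow_le_pow_right two_pos (Fintype.card_le_one_iff_subsingleton.2 ‹_› |>.trans hD)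

theorem card_filter_prodMap_eq {α β γ δ : Type*} [Fintype α] [Fintype β] [DecidableEq γ]
    [DecidableEq δ] (f : α → γ) (g : β → δ) (b : γ × δ) :
    #{x | Prod.map f g x = b} = #{x | f x = b.1} * #{y | g y = b.2} := by
  simp only [Prod.ext_iff, Prod.map_fst, Prod.map_snd, ← univ_product_univ]
  rw [filter_product (f · = b.1) (g · = b.2), card_product]

end ImageFibers

section Blocks

open Finset

variable {n N m : ℕ}

/-- The index of the block containing a vertex when `[n]` is cut into `N` blocks of `m` consecutive
vertices. Since only `n ≤ N * m` is required, trailing blocks may be incomplete or empty. -/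
def blockIndex (h : n ≤ N * m) (x : Fin n) : Fin N :=
  (x.castLE h).divNat

theorem blockIndex_monotone (h : n ≤ N * m) : Monotone (blockIndex h) :=
  fun _ _ hxy => Nat.div_le_div_right hxy

theorem card_filter_blockIndex_le (h : n ≤ N * m) (b : Fin N) :
    #{x | blockIndex h x = b} ≤ m := by
  have modNat_injOn : Set.InjOn (fun x => (x.castLE h).modNat) {x | blockIndex h x = b} :=
    fun x hx y hy hxy => Fin.castLE_injective h <| finProdFinEquiv.symm.injective <|
      Prod.ext (hx.trans hy.symm) hxy
  simpa using card_le_card_of_injOn (t := univ) _ (fun _ _ => mem_coe.2 (mem_univ _))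
    (modNat_injOn.mono (by simp))

end Blocks

section Avoidance

open Finset

variable {k n n' : ℕ} {q : Equiv.Perm (Fin k)}

theorem graphContains_permGraph_iff {G : Finset (Fin n × Fin n')} :
    GraphContains G (permGraph q) ↔ ∃ (f : Fin k → Fin n) (f' : Fin k → Fin n'),
      StrictMono f ∧ StrictMono f' ∧ ∀ i, (f i, f' (q i)) ∈ G := by
  simp [GraphContains, permGraph]

theorem matContains_adjMatrix_permMatrix_iff {G : Finset (Fin n × Fin n')} :
    MatContains (adjMatrix G) (permMatrix q) ↔ GraphContains G (permGraph q) := by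
  simp [MatContains, adjMatrix, permMatrix, graphContains_permGraph_iff]

theorem oneEntries_adjMatrix (G : Finset (Fin n × Fin n')) : oneEntries (adjMatrix G) = #G := by
  simp [oneEntries, adjMatrix]

theorem graphContains_permGraph_of_image {N N' : ℕ} {φ : Fin n → Fin N} {ψ : Fin n' → Fin N'}
    (hφ : Monotone φ) (hψ : Monotone ψ) {G : Finset (Fin n × Fin n')}
    (h : GraphContains (G.image (Prod.map φ ψ)) (permGraph q)) :
    GraphContains G (permGraph q) := by
  obtain ⟨f, f', hf, hf', hmem⟩ := graphContains_permGraph_iff.1 h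
  choose e he hφψ using fun i => mem_image.1 (hmem i)
  have hφe (i : Fin k) : φ (e i).1 = f i := congrArg Prod.fst (hφψ i)
  have hψe (j : Fin k) : ψ (e (q.symm j)).2 = f' j := by
    simpa using congrArg Prod.snd (hφψ (q.symm j))
  refine graphContains_permGraph_iff.2 ⟨fun i => (e i).1, fun j => (e (q.symm j)).2, ?_, ?_, ?_⟩
  · exact fun i j hij => hφ.reflect_lt (by simpa only [hφe] using hf hij)
  · exact fun i j hij => hψ.reflect_lt (by simpa only [hψe] using hf' hij)
  · simpa using he

open Classical in
/-- The bipartite graphs on `([n], [n'])` avoiding the graph of `q`, so that `G_{n,m}(q)` is the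
cardinality of `avoiders q (n * m) n`. -/
noncomputable def avoiders (q : Equiv.Perm (Fin k)) (n n' : ℕ) : Finset (Finset (Fin n × Fin n')) :=
  {G | ¬ GraphContains G (permGraph q)}

theorem mem_avoiders {G : Finset (Fin n × Fin n')} :
    G ∈ avoiders q n n' ↔ ¬ GraphContains G (permGraph q) := by
  simp [avoiders]

theorem card_le_of_mem_avoiders {D : ℕ}
    (hD : ∀ P : Fin n → Fin n' → Bool, ¬ MatContains P (permMatrix q) → oneEntries P ≤ D)
    {G : Finset (Fin n × Fin n')} (hG : G ∈ avoiders q n n') : #G ≤ D :=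
  oneEntries_adjMatrix G ▸
    hD (adjMatrix G) (matContains_adjMatrix_permMatrix_iff.not.2 (mem_avoiders.1 hG))

theorem card_avoiders_le_pow_mul_card_avoiders {N N' r s D : ℕ} (hn : n ≤ N * r)
    (hn' : n' ≤ N' * s) (hr : 0 < r) (hs : 0 < s) (hD : ∀ H ∈ avoiders q N N', #H ≤ D) :
    #(avoiders q n n') ≤ (2 ^ (r * s) - 1) ^ D * #(avoiders q N N') := by
  refine card_le_pow_mul_card_of_image_mem (F := Prod.map (blockIndex hn) (blockIndex hn'))
    (Nat.mul_pos hr hs) (fun b => ?_) (fun G hG => mem_avoiders.2 ?_) hD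
  · rw [card_filter_prodMap_eq]
    exact Nat.mul_le_mul (card_filter_blockIndex_le hn _) (card_filter_blockIndex_le hn' _)
  · exact mt (graphContains_permGraph_of_image (blockIndex_monotone hn) (blockIndex_monotone hn'))
      (mem_avoiders.1 hG)

theorem card_avoiders_self_le {d : ℕ} (hd : ∀ l, 0 < l → ∀ G ∈ avoiders q l l, #G ≤ d * l)
    (hn : 0 < n) : #(avoiders q n n) ≤ 15 ^ (2 * (d * n)) := by
  induction n using Nat.strong_induction_on with
  | _ n ih =>
    obtain rfl | one_lt : n = 1 ∨ 1 < n := by omega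
    · calc #(avoiders q 1 1) ≤ 2 ^ (d * 1) := card_le_two_pow_of_subsingleton (hd 1 one_pos)
        _ ≤ (15 ^ 2) ^ (d * 1) := Nat.pow_le_pow_left (by norm_num) _
        _ = 15 ^ (2 * (d * 1)) := (pow_mul _ _ _).symm
    · obtain ⟨c, c_pos, c_lt, n_le, three_mul_c_le⟩ :
          ∃ c, 0 < c ∧ c < n ∧ n ≤ c * 2 ∧ 3 * c ≤ 2 * n :=
        ⟨(n + 1) / 2, by omega, by omega, by omega, by omega⟩
      calc #(avoiders q n n)
          ≤ (2 ^ (2 * 2) - 1) ^ (d * c) * #(avoiders q c c) :=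
            card_avoiders_le_pow_mul_card_avoiders n_le n_le two_pos two_pos (hd c c_pos)
        _ ≤ 15 ^ (d * c) * 15 ^ (2 * (d * c)) := Nat.mul_le_mul_left _ (ih c c_lt c_pos)
        _ = 15 ^ (d * (3 * c)) := by ring
        _ ≤ 15 ^ (d * (2 * n)) := by gcongr; norm_num
        _ = 15 ^ (2 * (d * n)) := by rw [Nat.mul_left_comm]

end Avoidance

/-- `G_{n,m}(q) ≤ ((2^m - 1) · 15^2)^(d·n)` under Füredi–Hajnal. -/
theorem graph_count_bound {k : ℕ} (q : Equiv.Perm (Fin k)) (d : ℕ)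
    (hd : ∀ n : ℕ, 0 < n → ∀ P : Fin n → Fin n → Bool,
      ¬ MatContains P (permMatrix q) → oneEntries P ≤ d * n)
    (n m : ℕ) (hn : 0 < n) (hm : 0 < m) :
    Nat.card {G : Finset (Fin (n * m) × Fin n) // ¬ GraphContains G (permGraph q)} ≤
      ((2 ^ m - 1) * 15 ^ 2) ^ (d * n) := by
  have card_edges_le (l : ℕ) (hl : 0 < l) : ∀ G ∈ avoiders q l l, G.card ≤ d * l :=
    fun _ hG => card_le_of_mem_avoiders (hd l hl) hG
  calc Nat.card {G : Finset (Fin (n * m) × Fin n) // ¬ GraphContains G (permGraph q)}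
      = (avoiders q (n * m) n).card := Nat.subtype_card _ fun _ => mem_avoiders
    _ ≤ (2 ^ (m * 1) - 1) ^ (d * n) * (avoiders q n n).card :=
      card_avoiders_le_pow_mul_card_avoiders le_rfl (mul_one n).ge hm one_pos (card_edges_le n hn)
    _ ≤ (2 ^ m - 1) ^ (d * n) * (15 ^ 2) ^ (d * n) := by
      rw [mul_one, ← pow_mul]
      exact Nat.mul_le_mul_left _ (card_avoiders_self_le card_edges_le hn)
    _ = ((2 ^ m - 1) * 15 ^ 2) ^ (d * n) := (mul_pow _ _ _).symm
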